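/- arXiv:1810.05190 — 3 statements merged into one kernel-verified Lean document; each statement's English description precedes it below -/
import Mathlib

section
/- Let k ∈ ℕ. Suppose a and b are vertices of a finite multigraph G such that G has a (k+1)-positive subgraph containing both a and b. Then Join has a winning strategy for the (k,k)-Shannon switching game played on (G,a,b). -/
namespace ShannonSwitching

variable {V E : Type}

/-- `u` is joined to `v` by a walk using only edges from `F`, in the multigraph with
edge-endpoint map `ends`. -/
def Reach (ends : E → V × V) (F : Set E) (u v : V) : Prop :=
  Relation.ReflTransGen
    (fun a b => ∃ e ∈ F,
      ((ends e).1 = a ∧ (ends e).2 = b) ∨ ((ends e).1 = b ∧ (ends e).2 = a)) u v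

/-- The subgraph `(V', E')` of the multigraph is `k`-positive: it contains `k` pairwise
edge-disjoint connected spanning subgraphs. -/
def kPositive (ends : E → V × V) (V' : Set V) (E' : Set E) (k : ℕ) : Prop :=
  ∃ F : Fin k → Set E,
    (∀ i, F i ⊆ E') ∧
    (Pairwise fun i j => Disjoint (F i) (F j)) ∧
    ∀ i, ∀ u ∈ V', ∀ v ∈ V', Reach ends (F i) u v

/-- A strategy in the Shannon switching game: given the list of all moves played so far
(oldest first), produce the next move (a finite set of edges). -/
abbrev SStrategy (E : Type) : Type := List (Finset E) → Finset E

variable [DecidableEq E]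

/-- The union of the moves sitting in positions of the given parity of a history. -/
def altUnion : Bool → List (Finset E) → Finset E
  | _, [] => ∅
  | true, mv :: h => mv ∪ altUnion false h
  | false, _ :: h => altUnion true h

/-- All edges claimed by the player moving first in a history. -/
def firstClaimed (h : List (Finset E)) : Finset E := altUnion true h

/-- All edges claimed by the player moving second in a history. -/
def secondClaimed (h : List (Finset E)) : Finset E := altUnion false h

/-- All edges claimed so far in a history. -/
def allClaimed (h : List (Finset E)) : Finset E := h.foldr (· ∪ ·) ∅

/-- The history of moves (oldest first) after `t` full rounds, when the player moving
first uses strategy `σ` and the player moving second uses strategy `τ`. -/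
def hist (σ τ : SStrategy E) : ℕ → List (Finset E)
  | 0 => []
  | t + 1 =>
    let h := hist σ τ t
    h ++ [σ h, τ (h ++ [σ h])]

/-- The move `mv` is legal on `board` after the history `h` for a player of bias `k`: it
consists of as-yet-unclaimed edges of the board, exactly `k` of them unless fewer than
`k` unclaimed edges remain, in which case the player takes all of them. -/
def LegalMove (board : Set E) (h : List (Finset E)) (k : ℕ) (mv : Finset E) : Prop :=
  (↑mv : Set E) ⊆ board \ ↑(allClaimed h) ∧
    (mv.card = k ∨ (mv.card < k ∧ board \ ↑(allClaimed h) ⊆ (↑mv : Set E)))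

/-- The player moving first (with bias `k`) always moves legally when playing `σ`
against `τ`. -/
def FirstLegal (board : Set E) (k : ℕ) (σ τ : SStrategy E) : Prop :=
  ∀ t, LegalMove board (hist σ τ t) k (σ (hist σ τ t))

/-- The player moving second (with bias `k`) always moves legally when playing `τ`
against `σ`. -/
def SecondLegal (board : Set E) (k : ℕ) (σ τ : SStrategy E) : Prop :=
  ∀ t, LegalMove board (hist σ τ t ++ [σ (hist σ τ t)]) k
    (τ (hist σ τ t ++ [σ (hist σ τ t)]))

/-- Join has a winning strategy for the `(k,k)`-Shannon switching game on `(G,a,b)`: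
Cut moves first, deleting `k` unsafe edges per turn, Join answers by marking `k` unsafe
edges as safe per turn, and Join can guarantee that when all edges have been used up her
safe edges contain a path from `a` to `b` (equivalently, that at some point the safe
edges contain such a path, since safe edges only accumulate). -/
def JoinWins (ends : E → V × V) (a b : V) (k : ℕ) : Prop :=
  ∃ τ : SStrategy E, ∀ σ : SStrategy E,
    FirstLegal (Set.univ : Set E) k σ τ →
      SecondLegal (Set.univ : Set E) k σ τ ∧
      ∃ t, Reach ends (↑(secondClaimed (hist σ τ t)) : Set E) a b

/-!
Contract Join's edges. If the unclaimed edges then still contain `k + 1` disjoint connected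
spanning subgraphs, the at most `k` edges Cut deletes miss one of these subgraphs, say `F j`. By
the exchange property of connected spanning sets, every deleted edge of another `F i` can be
replaced by an edge of `F j`. Join claims all these replacements, at most `k` in total, which
contracts them, so that all `k + 1` subgraphs, `F j` included, are again connected and spanning.
Since Join can always claim at least one edge of the given subgraph, its edges run out after
finitely many rounds, and from then on Join's edges alone are connected and spanning.
-/

section Connectivity

omit [DecidableEq E]

variable {ends : E → V × V} {V' : Set V} {X Y : Set E} {u v w : V} {e f : E}

protected theorem Reach.mono (hXY : X ⊆ Y) (h : Reach ends X u v) : Reach ends Y u v :=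
  Relation.ReflTransGen.mono (fun _ _ ⟨e, he, hends⟩ => ⟨e, hXY he, hends⟩) _ _ h

protected theorem Reach.symm (h : Reach ends X u v) : Reach ends X v u := by
  induction h with
  | refl => exact Relation.ReflTransGen.refl
  | tail _ hstep ih =>
    obtain ⟨e, he, hends⟩ := hstep
    exact Relation.ReflTransGen.head ⟨e, he, hends.symm⟩ ih

protected theorem Reach.trans (huv : Reach ends X u v) (hvw : Reach ends X v w) :
    Reach ends X u w :=
  Relation.ReflTransGen.trans huv hvw

theorem reach_of_mem (he : e ∈ X) : Reach ends X (ends e).1 (ends e).2 :=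
  Relation.ReflTransGen.single ⟨e, he, Or.inl ⟨rfl, rfl⟩⟩

theorem Reach.of_forall_mem (hY : ∀ e ∈ Y, Reach ends X (ends e).1 (ends e).2)
    (h : Reach ends Y u v) : Reach ends X u v := by
  refine Relation.reflTransGen_closed ?_ _ _ h
  rintro _ _ ⟨e, he, ⟨rfl, rfl⟩ | ⟨rfl, rfl⟩⟩
  · exact hY e he
  · exact (hY e he).symm

theorem Reach.of_insert (h : Reach ends (insert e X) u v) :
    Reach ends X u v ∨ Reach ends X u (ends e).1 ∨ Reach ends X u (ends e).2 := by
  induction h with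
  | refl => exact Or.inl Relation.ReflTransGen.refl
  | tail _ hstep ih =>
    rcases ih with hu | hu
    · obtain ⟨f, rfl | hf, hends⟩ := hstep
      · rcases hends with ⟨rfl, -⟩ | ⟨-, rfl⟩
        · exact Or.inr (Or.inl hu)
        · exact Or.inr (Or.inr hu)
      · exact Or.inl (hu.tail ⟨f, hf, hends⟩)
    · exact Or.inr hu

theorem Reach.exchange (h : Reach ends (insert e X) (ends f).1 (ends f).2)
    (hf : ¬ Reach ends X (ends f).1 (ends f).2) :
    Reach ends (insert f X) (ends e).1 (ends e).2 := by
  have hsub : X ⊆ insert f X := Set.subset_insert f X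
  have hedge : Reach ends (insert f X) (ends f).1 (ends f).2 := reach_of_mem (Set.mem_insert f X)
  rcases h.of_insert.resolve_left hf with h₁ | h₁ <;>
    rcases h.symm.of_insert.resolve_left (fun h' => hf h'.symm) with h₂ | h₂
  · exact absurd (h₁.trans h₂.symm) hf
  · exact ((h₁.symm.mono hsub).trans hedge).trans (h₂.mono hsub)
  · exact ((h₂.symm.mono hsub).trans hedge.symm).trans (h₁.mono hsub)
  · exact absurd (h₁.trans h₂.symm) hf

/-- The edges `X` connect the vertex set `V'`: the notion of connected spanning subgraph on `V'`
that underlies `kPositive`. Walks may leave `V'`. -/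
def Connects (ends : E → V × V) (V' : Set V) (X : Set E) : Prop :=
  ∀ u ∈ V', ∀ v ∈ V', Reach ends X u v

protected theorem Connects.mono (hXY : X ⊆ Y) (h : Connects ends V' X) : Connects ends V' Y :=
  fun u hu v hv => (h u hu v hv).mono hXY

theorem Connects.of_forall_mem (hY : ∀ e ∈ Y, Reach ends X (ends e).1 (ends e).2)
    (h : Connects ends V' Y) : Connects ends V' X :=
  fun u hu v hv => (h u hu v hv).of_forall_mem hY

theorem Connects.exchange (hY : ∀ f ∈ Y, (ends f).1 ∈ V' ∧ (ends f).2 ∈ V')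
    (hXe : Connects ends V' (insert e X)) (hXY : Connects ends V' (X ∪ Y)) :
    Connects ends V' X ∨ ∃ f ∈ Y, Connects ends V' (insert f X) := by
  by_cases hreach : ∀ f ∈ Y, Reach ends X (ends f).1 (ends f).2
  · refine Or.inl (hXY.of_forall_mem ?_)
    rintro f (hf | hf)
    · exact reach_of_mem hf
    · exact hreach f hf
  · push Not at hreach
    obtain ⟨f, hfY, hf⟩ := hreach
    refine Or.inr ⟨f, hfY, hXe.of_forall_mem ?_⟩
    rintro g (rfl | hg)
    · exact (hXe _ (hY f hfY).1 _ (hY f hfY).2).exchange hf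
    · exact reach_of_mem (Set.mem_insert_of_mem f hg)

theorem Connects.exists_finset_exchange (hY : ∀ f ∈ Y, (ends f).1 ∈ V' ∧ (ends f).2 ∈ V')
    {D : Finset E} (hXD : Connects ends V' (X ∪ D)) (hXY : Connects ends V' (X ∪ Y)) :
    ∃ A : Finset E, ↑A ⊆ Y ∧ A.card ≤ D.card ∧ Connects ends V' (X ∪ A) := by
  classical
  induction D using Finset.induction_on generalizing X with
  | empty => exact ⟨∅, by simp, le_rfl, hXD⟩
  | insert e D he ih =>
    obtain ⟨A, hAY, hcard, hA⟩ := ih (X := insert e X)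
      (by rwa [Finset.coe_insert, Set.union_insert, ← Set.insert_union] at hXD)
      (hXY.mono (Set.union_subset_union_left Y (Set.subset_insert e X)))
    rw [Finset.card_insert_of_notMem he]
    rw [Set.insert_union] at hA
    rcases hA.exchange hY (hXY.mono (Set.union_subset_union_left Y Set.subset_union_left))
      with h | ⟨f, hf, h⟩
    · exact ⟨A, hAY, by lia, h⟩
    · refine ⟨insert f A, ?_, (Finset.card_insert_le f A).trans (by lia), ?_⟩
      · rw [Finset.coe_insert]
        exact Set.insert_subset hf hAY
      · rwa [Finset.coe_insert, Set.union_insert]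

end Connectivity

section Packing

omit [DecidableEq E]

/-- The multigraph with vertex set `V'` and edge set `U` becomes `k`-positive once the edges in
`S` are contracted. Contraction is encoded by adding `S` to each of the `k` disjoint
subgraphs, so that no quotient of the vertex set is needed. -/
def kPositiveContract (ends : E → V × V) (V' : Set V) (S U : Set E) (k : ℕ) : Prop :=
  ∃ F : Fin k → Set E,
    (∀ i, F i ⊆ U) ∧ (Pairwise fun i j => Disjoint (F i) (F j)) ∧
    ∀ i, Connects ends V' (F i ∪ S)

variable {ends : E → V × V} {V' : Set V} {S U : Set E} {k : ℕ}

theorem kPositive.contract_empty (h : kPositive ends V' U k) :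
    kPositiveContract ends V' ∅ U k := by
  obtain ⟨F, hFU, hdisj, hconn⟩ := h
  exact ⟨F, hFU, hdisj, fun i => by rw [Set.union_empty]; exact hconn i⟩

theorem kPositiveContract.connects (h : kPositiveContract ends V' S ∅ k) (hk : 0 < k) :
    Connects ends V' S := by
  obtain ⟨F, hF, -, hconn⟩ := h
  have hS := hconn ⟨0, hk⟩
  rwa [Set.subset_empty_iff.1 (hF _), Set.empty_union] at hS

theorem kPositiveContract.contract (h : kPositiveContract ends V' S U k) (B : Set E) :
    kPositiveContract ends V' (S ∪ B) (U \ B) k := by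
  obtain ⟨F, hFU, hdisj, hconn⟩ := h
  refine ⟨fun i => F i \ B, fun i => Set.sdiff_subset_sdiff_left (hFU i),
    fun i j hij => (hdisj hij).mono Set.sdiff_subset Set.sdiff_subset, fun i => ?_⟩
  refine (hconn i).mono fun x hx => ?_
  simp only [Set.mem_union, Set.mem_sdiff] at hx ⊢
  tauto

theorem sum_card_filter_mem_le {α ι : Type*} [Fintype ι] {F : ι → Set α}
    [∀ i, DecidablePred (· ∈ F i)] (hF : Pairwise fun i j => Disjoint (F i) (F j))
    (D : Finset α) : ∑ i, (D.filter (· ∈ F i)).card ≤ D.card := by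
  classical
  rw [← Finset.card_biUnion]
  · exact Finset.card_le_card (Finset.biUnion_subset.2 fun i _ => Finset.filter_subset _ D)
  · intro i _ j _ hij
    exact Finset.disjoint_filter.2 fun x _ hi hj => Set.disjoint_left.1 (hF hij) hi hj

theorem kPositiveContract.exists_repair (hU : ∀ e ∈ U, (ends e).1 ∈ V' ∧ (ends e).2 ∈ V')
    (h : kPositiveContract ends V' S U k) {D : Finset E} (hD : D.card < k) :
    ∃ A : Finset E, ↑A ⊆ U \ ↑D ∧ A.card ≤ D.card ∧
      kPositiveContract ends V' (S ∪ A) (U \ D) k := by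
  classical
  obtain ⟨F, hFU, hdisj, hconn⟩ := h
  have hsum := sum_card_filter_mem_le hdisj D
  obtain ⟨j, hj⟩ : ∃ j, D.filter (· ∈ F j) = ∅ := by
    have hlt : ∑ i, (D.filter (· ∈ F i)).card < ∑ _i : Fin k, 1 := by simpa using hsum.trans_lt hD
    obtain ⟨j, -, hj⟩ := Finset.exists_lt_of_sum_lt hlt
    exact ⟨j, Finset.card_eq_zero.1 (Nat.lt_one_iff.1 hj)⟩
  have hjD : ∀ x ∈ F j, x ∉ D := fun x hxF hxD => Finset.filter_eq_empty_iff.1 hj hxD hxF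
  have hrepair (i) : ∃ A : Finset E, ↑A ⊆ F j ∧ A.card ≤ (D.filter (· ∈ F i)).card ∧
      Connects ends V' ((F i \ D ∪ S) ∪ A) := by
    refine Connects.exists_finset_exchange (fun f hf => hU f (hFU j hf)) ?_ ?_
    · refine (hconn i).mono fun x hx => ?_
      simp only [Set.mem_union, Set.mem_sdiff, Finset.mem_coe, Finset.mem_filter] at hx ⊢
      tauto
    · refine (hconn j).mono (Set.union_subset Set.subset_union_right ?_)
      exact Set.subset_union_right.trans Set.subset_union_left
  choose A hAF hAcard hAconn using hrepair
  refine ⟨Finset.univ.biUnion A, ?_, ?_, fun i => F i \ D,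
    fun i => Set.sdiff_subset_sdiff_left (hFU i),
    fun i i' hii' => (hdisj hii').mono Set.sdiff_subset Set.sdiff_subset, fun i => ?_⟩
  · simp only [Finset.coe_biUnion, Set.iUnion_subset_iff]
    exact fun i _ x hx => ⟨hFU j (hAF i hx), hjD x (hAF i hx)⟩
  · exact Finset.card_biUnion_le.trans ((Finset.sum_le_sum fun i _ => hAcard i).trans hsum)
  · rw [← Set.union_assoc]
    refine (hAconn i).mono (Set.union_subset_union_right _ ?_)
    exact Finset.coe_subset.2 (Finset.subset_biUnion_of_mem A (Finset.mem_univ i))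

end Packing

section History

variable {h : List (Finset E)} {B : Finset E} {σ τ : SStrategy E} {board : Set E} {k : ℕ}

theorem altUnion_concat (b : Bool) (h : List (Finset E)) (B : Finset E) :
    altUnion b (h ++ [B]) = altUnion b h ∪ if (b ↔ Even h.length) then B else ∅ := by
  induction h generalizing b with
  | nil => cases b <;> simp [altUnion]
  | cons C h ih => cases b <;> simp [altUnion, ih, Nat.even_add_one, Finset.union_assoc]

theorem secondClaimed_concat_of_even (hh : Even h.length) (B : Finset E) :
    secondClaimed (h ++ [B]) = secondClaimed h := by
  simp [secondClaimed, altUnion_concat, hh]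

theorem secondClaimed_concat_of_odd (hh : Odd h.length) (B : Finset E) :
    secondClaimed (h ++ [B]) = secondClaimed h ∪ B := by
  simp [secondClaimed, altUnion_concat, Nat.not_even_iff_odd.2 hh]

theorem allClaimed_concat (h : List (Finset E)) (B : Finset E) :
    allClaimed (h ++ [B]) = allClaimed h ∪ B := by
  induction h with
  | nil => simp [allClaimed]
  | cons C h ih => simp_all [allClaimed, Finset.union_assoc]

omit [DecidableEq E] in
theorem hist_succ (σ τ : SStrategy E) (t : ℕ) :
    hist σ τ (t + 1) =
      hist σ τ t ++ [σ (hist σ τ t)] ++ [τ (hist σ τ t ++ [σ (hist σ τ t)])] := by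
  simp [hist]

omit [DecidableEq E] in
theorem even_length_hist (σ τ : SStrategy E) (t : ℕ) : Even (hist σ τ t).length := by
  induction t with
  | zero => simp [hist]
  | succ t ih => simpa [hist_succ, Nat.even_add_one] using ih

theorem LegalMove.card_le (hB : LegalMove board h k B) : B.card ≤ k :=
  hB.2.elim le_of_eq fun hlt => hlt.1.le

theorem exists_legalMove_superset {A : Finset E} (hA : ↑A ⊆ board \ ↑(allClaimed h))
    (hcard : A.card ≤ k) : ∃ B, A ⊆ B ∧ LegalMove board h k B := by
  by_cases hk : (k : ℕ∞) ≤ (board \ ↑(allClaimed h)).encard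
  · obtain ⟨B, hAB, hB, hBcard⟩ := Set.exists_superset_subset_encard_eq hA
      (by rwa [Set.encard_coe_eq_coe_finsetCard, Nat.cast_le]) hk
    lift B to Finset E using Set.finite_of_encard_eq_coe hBcard
    rw [Set.encard_coe_eq_coe_finsetCard, Nat.cast_inj] at hBcard
    exact ⟨B, Finset.coe_subset.1 hAB, hB, Or.inl hBcard⟩
  · rw [not_le] at hk
    obtain ⟨B, hB⟩ := (Set.finite_of_encard_le_coe hk.le).exists_finset_coe
    rw [← hB, Set.encard_coe_eq_coe_finsetCard, Nat.cast_lt] at hk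
    exact ⟨B, Finset.coe_subset.1 (hB ▸ hA), hB.le, Or.inr ⟨hk, hB.ge⟩⟩

end History

section JoinStrategy

/-- Join's invariant: the unclaimed edges of the subgraph `(V', E')` are `(k + 1)`-positive after
contracting Join's edges. -/
def JoinInvariant (ends : E → V × V) (V' : Set V) (E' : Set E) (k : ℕ)
    (h : List (Finset E)) : Prop :=
  kPositiveContract ends V' ↑(secondClaimed h) (E' \ ↑(allClaimed h)) (k + 1)

/-- The move `B` is a reply Join is willing to make after the history `h`: it is legal, keeps her
invariant, and makes progress by claiming an edge of `E'` while one is left. -/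
structure GoodReply (ends : E → V × V) (V' : Set V) (E' : Set E) (k : ℕ)
    (h : List (Finset E)) (B : Finset E) : Prop where
  legal : LegalMove Set.univ h k B
  invariant : JoinInvariant ends V' E' k (h ++ [B])
  progress : ¬ E' ⊆ ↑(allClaimed h) → ∃ e ∈ E', e ∈ B

/-- Join's winning strategy: play some good reply (an arbitrary move where there is none). -/
noncomputable def joinStrategy (ends : E → V × V) (V' : Set V) (E' : Set E) (k : ℕ) :
    SStrategy E :=
  fun h => Classical.epsilon (GoodReply ends V' E' k h)

variable {ends : E → V × V} {V' : Set V} {E' : Set E} {k : ℕ} {h : List (Finset E)}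
  {B D : Finset E} {σ τ : SStrategy E}

theorem kPositive.joinInvariant_nil (h : kPositive ends V' E' (k + 1)) :
    JoinInvariant ends V' E' k [] := by
  simpa [JoinInvariant, secondClaimed, altUnion, allClaimed] using h.contract_empty

theorem JoinInvariant.connects (hinv : JoinInvariant ends V' E' k h)
    (hE' : E' ⊆ ↑(allClaimed h)) : Connects ends V' ↑(secondClaimed h) := by
  rw [JoinInvariant, Set.sdiff_eq_empty.2 hE'] at hinv
  exact kPositiveContract.connects hinv k.succ_pos

theorem JoinInvariant.exists_goodReply (hk : 1 ≤ k)
    (hE : ∀ e ∈ E', (ends e).1 ∈ V' ∧ (ends e).2 ∈ V') (hinv : JoinInvariant ends V' E' k h)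
    (heven : Even h.length) (hD : D.card ≤ k) :
    ∃ B, GoodReply ends V' E' k (h ++ [D]) B := by
  obtain ⟨A, hAU, hAD, hpos⟩ :=
    kPositiveContract.exists_repair (fun e he => hE e he.1) hinv (Nat.lt_succ_of_le hD)
  have hclaimed : (↑(allClaimed (h ++ [D])) : Set E) = ↑(allClaimed h) ∪ ↑D := by
    rw [allClaimed_concat, Finset.coe_union]
  rw [Set.sdiff_sdiff, ← hclaimed] at hAU hpos
  obtain ⟨A', hAA', hA'U, hA'k, hA'⟩ : ∃ A' : Finset E, A ⊆ A' ∧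
      ↑A' ⊆ E' \ ↑(allClaimed (h ++ [D])) ∧ A'.card ≤ k ∧
      (¬ E' ⊆ ↑(allClaimed (h ++ [D])) → A'.Nonempty) := by
    by_cases hne : A = ∅ ∧ ¬ E' ⊆ ↑(allClaimed (h ++ [D]))
    · obtain ⟨rfl, hE'⟩ := hne
      obtain ⟨e, he⟩ := Set.sdiff_nonempty.2 hE'
      exact ⟨{e}, by simp, by simpa using he, by simpa using hk, by simp⟩
    · exact ⟨A, subset_rfl, hAU, hAD.trans hD, by grind⟩
  obtain ⟨B, hA'B, hB⟩ :=
    exists_legalMove_superset (hA'U.trans (Set.sdiff_subset_sdiff_left (Set.subset_univ E'))) hA'k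
  refine ⟨B, hB, ?_, fun hE' => ?_⟩
  · have hodd : Odd (h ++ [D]).length := by simpa using heven.add_one
    rw [JoinInvariant, secondClaimed_concat_of_odd hodd, secondClaimed_concat_of_even heven,
      allClaimed_concat, Finset.coe_union, Finset.coe_union, ← Set.sdiff_sdiff]
    have hposB := hpos.contract (B : Set E)
    rwa [Set.union_assoc,
      Set.union_eq_right.2 (Finset.coe_subset.2 (hAA'.trans hA'B))] at hposB
  · obtain ⟨e, he⟩ := hA' hE'
    exact ⟨e, (hA'U he).1, hA'B he⟩

theorem JoinInvariant.goodReply_joinStrategy (hk : 1 ≤ k)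
    (hE : ∀ e ∈ E', (ends e).1 ∈ V' ∧ (ends e).2 ∈ V') (hinv : JoinInvariant ends V' E' k h)
    (heven : Even h.length) (hD : D.card ≤ k) :
    GoodReply ends V' E' k (h ++ [D]) (joinStrategy ends V' E' k (h ++ [D])) :=
  Classical.epsilon_spec (hinv.exists_goodReply hk hE heven hD)

theorem joinInvariant_hist_joinStrategy (hk : 1 ≤ k)
    (hE : ∀ e ∈ E', (ends e).1 ∈ V' ∧ (ends e).2 ∈ V') (hpos : kPositive ends V' E' (k + 1))
    (hσ : FirstLegal Set.univ k σ (joinStrategy ends V' E' k)) (t : ℕ) :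
    JoinInvariant ends V' E' k (hist σ (joinStrategy ends V' E' k) t) := by
  induction t with
  | zero => exact hpos.joinInvariant_nil
  | succ t ih =>
    rw [hist_succ]
    exact (ih.goodReply_joinStrategy hk hE (even_length_hist _ _ t) (hσ t).card_le).invariant

theorem GoodReply.sdiff_allClaimed_concat_ssubset (hB : GoodReply ends V' E' k h B)
    (hE' : ¬ E' ⊆ ↑(allClaimed h)) :
    E' \ ↑(allClaimed (h ++ [B])) ⊂ E' \ ↑(allClaimed h) := by
  obtain ⟨e, heE', heB⟩ := hB.progress hE'
  rw [allClaimed_concat, Finset.coe_union]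
  refine (Set.ssubset_iff_of_subset
    (Set.sdiff_subset_sdiff_right Set.subset_union_left)).2 ⟨e, ⟨heE', ?_⟩, ?_⟩
  · exact (hB.legal.1 heB).2
  · exact fun he => he.2 (Or.inr heB)

theorem exists_subset_allClaimed_hist (hfin : E'.Finite)
    (hτ : ∀ t, GoodReply ends V' E' k (hist σ τ t ++ [σ (hist σ τ t)])
      (τ (hist σ τ t ++ [σ (hist σ τ t)]))) :
    ∃ t, E' ⊆ ↑(allClaimed (hist σ τ t)) := by
  by_contra! hne
  have hanti : StrictAnti fun t => (E' \ ↑(allClaimed (hist σ τ t))).ncard := by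
    refine strictAnti_nat_of_succ_lt fun t => Set.ncard_lt_ncard ?_ hfin.sdiff
    have hmono : E' \ ↑(allClaimed (hist σ τ t ++ [σ (hist σ τ t)])) ⊆
        E' \ ↑(allClaimed (hist σ τ t)) := by
      rw [allClaimed_concat, Finset.coe_union]
      exact Set.sdiff_subset_sdiff_right Set.subset_union_left
    rw [hist_succ]
    refine ((hτ t).sdiff_allClaimed_concat_ssubset fun hE' => hne (t + 1) ?_).trans_subset hmono
    rw [hist_succ, allClaimed_concat, Finset.coe_union]
    exact hE'.trans Set.subset_union_left
  exact not_strictAnti_of_wellFoundedLT _ hanti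

end JoinStrategy

/-- On an infinite board the game need not end: `JoinWins` then asks Join to have connected `a`
to `b` after finitely many rounds. -/
theorem join_wins_biased_shannon_switching_game_general
    {V E : Type} [DecidableEq E]
    (ends : E → V × V) (a b : V) (k : ℕ) (hk : 1 ≤ k)
    (hpos : ∃ (V' : Set V) (E' : Set E), E'.Finite ∧ a ∈ V' ∧ b ∈ V' ∧
      (∀ e ∈ E', (ends e).1 ∈ V' ∧ (ends e).2 ∈ V') ∧
      kPositive ends V' E' (k + 1)) :
    JoinWins ends a b k := by
  obtain ⟨V', E', hfin, ha, hb, hE, hpos⟩ := hpos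
  refine ⟨joinStrategy ends V' E' k, fun σ hσ => ?_⟩
  have hinv := joinInvariant_hist_joinStrategy hk hE hpos hσ
  have hreply t := (hinv t).goodReply_joinStrategy hk hE (even_length_hist _ _ t) (hσ t).card_le
  obtain ⟨t, ht⟩ := exists_subset_allClaimed_hist hfin hreply
  exact ⟨fun t => (hreply t).legal, t, (hinv t).connects ht a ha b hb⟩

/-- **Lehman's theorem, biased version.** Let `k ≥ 1`. If `a, b` are vertices of a finite
multigraph `G` (given by an edge-endpoint map `ends`) admitting a `(k+1)`-positive
subgraph `(V', E')` containing both `a` and `b`, then Join has a winning strategy for the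
`(k,k)`-Shannon switching game on `(G, a, b)`. -/
theorem join_wins_biased_shannon_switching_game
    {V E : Type} [Fintype V] [Fintype E] [DecidableEq E]
    (ends : E → V × V) (a b : V) (k : ℕ) (hk : 1 ≤ k)
    (hpos : ∃ (V' : Set V) (E' : Set E), a ∈ V' ∧ b ∈ V' ∧
      (∀ e ∈ E', (ends e).1 ∈ V' ∧ (ends e).2 ∈ V') ∧
      kPositive ends V' E' (k + 1)) :
    JoinWins ends a b k := by
  obtain ⟨V', E', ha, hb, hE, hpos⟩ := hpos
  exact join_wins_biased_shannon_switching_game_general ends a b k hk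
    ⟨V', E', E'.toFinite, ha, hb, hE, hpos⟩

end ShannonSwitching
end

section
/- For all natural numbers m, n with m > n+1, Breaker (the second player) has a winning strategy for the (1,1)-crossing game on S_{m×n}. -/
namespace CrossingGames

/-- A vertex of the square integer lattice `ℤ²`. -/
abbrev Vtx : Type := ℤ × ℤ

/-- An edge of the square integer lattice `ℤ²`, encoded as a base vertex together with a
direction: `(v, true)` is the horizontal edge joining `v = (x,y)` to `(x+1,y)`, while
`(v, false)` is the vertical edge joining `v = (x,y)` to `(x,y+1)`. -/
abbrev Edge : Type := Vtx × Bool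

/-- The two endpoints of an edge. -/
def ends (e : Edge) : Vtx × Vtx :=
  (e.1, if e.2 then (e.1.1 + 1, e.1.2) else (e.1.1, e.1.2 + 1))

/-- The edge `e` joins the vertices `u` and `v`. -/
def joins (e : Edge) (u v : Vtx) : Prop :=
  ((ends e).1 = u ∧ (ends e).2 = v) ∨ ((ends e).1 = v ∧ (ends e).2 = u)

/-- The vertex set of the grid `Λ_{m×n}`: all `(x,y) ∈ ℤ²` with `1 ≤ x ≤ m`, `1 ≤ y ≤ n`. -/
def lamVtx (m n : ℕ) : Set Vtx :=
  {v | 1 ≤ v.1 ∧ v.1 ≤ (m : ℤ) ∧ 1 ≤ v.2 ∧ v.2 ≤ (n : ℤ)}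

/-- The edge set of the grid `Λ_{m×n}`: lattice edges with both endpoints in `Λ_{m×n}`. -/
def lamEdges (m n : ℕ) : Set Edge :=
  {e | (ends e).1 ∈ lamVtx m n ∧ (ends e).2 ∈ lamVtx m n}

/-- The edge set of the board `S_{m×n}`: the grid `Λ_{m×n}` with all of its leftmost and
rightmost vertical edges deleted. -/
def sEdges (m n : ℕ) : Set Edge :=
  {e ∈ lamEdges m n | ¬ (e.2 = false ∧ (e.1.1 = 1 ∨ e.1.1 = (m : ℤ)))}

/-- The list of consecutive pairs of a list. -/
def cp {α : Type*} (l : List α) : List (α × α) := l.zip l.tail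

/-- `S` contains all the edges of a left-right crossing path of a board with `m` columns
and `n` rows: a path of edges of `S` joining a vertex `(1,y)` on the left-hand side of the
board to a vertex `(m,y')` on its right-hand side. -/
def HasCrossing (m n : ℕ) (S : Set Edge) : Prop :=
  ∃ l : List Vtx,
    (∃ v, l.head? = some v ∧ v.1 = 1) ∧
    (∃ v, l.getLast? = some v ∧ v.1 = (m : ℤ)) ∧
    (∀ v ∈ l, v ∈ lamVtx m n) ∧
    ∀ p ∈ cp l, ∃ e ∈ S, joins e p.1 p.2

/-- A strategy: given the list of all moves played so far (oldest first), produce the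
next move (a finite set of edges to claim). -/
abbrev Strategy : Type := List (Finset Edge) → Finset Edge

/-- The union of the moves sitting in positions of the given parity of a history
(`true`: positions 0, 2, 4, …; `false`: positions 1, 3, 5, …). -/
def altUnion : Bool → List (Finset Edge) → Finset Edge
  | _, [] => ∅
  | true, mv :: h => mv ∪ altUnion false h
  | false, _ :: h => altUnion true h

/-- All edges claimed by the player moving first (i.e. on even positions) in a history. -/
def firstClaimed (h : List (Finset Edge)) : Finset Edge := altUnion true h

/-- All edges claimed by the player moving second (i.e. on odd positions) in a history. -/
def secondClaimed (h : List (Finset Edge)) : Finset Edge := altUnion false h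

/-- All edges claimed so far in a history. -/
def allClaimed (h : List (Finset Edge)) : Finset Edge := h.foldr (· ∪ ·) ∅

/-- The history of moves (oldest first) after `t` full rounds, when the player moving
first uses strategy `σ` and the player moving second uses strategy `τ`. -/
def hist (σ τ : Strategy) : ℕ → List (Finset Edge)
  | 0 => []
  | t + 1 =>
    let h := hist σ τ t
    h ++ [σ h, τ (h ++ [σ h])]

/-- The move `mv` is legal on `board` after the history `h` for a player of bias `k`: it
consists of as-yet-unclaimed edges of the board, and there are exactly `k` of them, unless
fewer than `k` unclaimed edges remain, in which case the player claims all of them. -/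
def LegalMove (board : Set Edge) (h : List (Finset Edge)) (k : ℕ) (mv : Finset Edge) : Prop :=
  (↑mv : Set Edge) ⊆ board \ ↑(allClaimed h) ∧
    (mv.card = k ∨ (mv.card < k ∧ board \ ↑(allClaimed h) ⊆ (↑mv : Set Edge)))

/-- The player moving first (with bias `p`) always moves legally when playing `σ`
against `τ`. -/
def FirstLegal (board : Set Edge) (p : ℕ) (σ τ : Strategy) : Prop :=
  ∀ t, LegalMove board (hist σ τ t) p (σ (hist σ τ t))

/-- The player moving second (with bias `q`) always moves legally when playing `τ`
against `σ`. -/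
def SecondLegal (board : Set Edge) (q : ℕ) (σ τ : Strategy) : Prop :=
  ∀ t, LegalMove board (hist σ τ t ++ [σ (hist σ τ t)]) q (τ (hist σ τ t ++ [σ (hist σ τ t)]))

/-- Maker (playing first and claiming `p` edges per turn) has a winning strategy for the
Maker–Breaker game on `board` in which Breaker claims `q` edges per turn: she can
guarantee that at some point her claimed edges satisfy the winning condition `win`. -/
def MakerWins (board : Set Edge) (win : Set Edge → Prop) (p q : ℕ) : Prop :=
  ∃ σ : Strategy, ∀ τ : Strategy, SecondLegal board q σ τ →
    FirstLegal board p σ τ ∧ ∃ t, win ↑(firstClaimed (hist σ τ t))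

/-- Breaker (playing second and claiming `q` edges per turn) has a winning strategy for
the Maker–Breaker game on `board` in which Maker claims `p` edges per turn: he can
forever prevent Maker's claimed edges from satisfying the winning condition `win`. -/
def BreakerWins (board : Set Edge) (win : Set Edge → Prop) (p q : ℕ) : Prop :=
  ∃ τ : Strategy, ∀ σ : Strategy, FirstLegal board p σ τ →
    SecondLegal board q σ τ ∧ ∀ t, ¬ win ↑(firstClaimed (hist σ τ t))

/-! Contract the two sides of the board to a single vertex. A left-right crossing then contains a
cycle, while the edges of the board split into two forests: in one of them every vertex between the
sides has at most one edge leading left or up, in the other at most one leading right or down. The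
argument behind Lehman's theorem on Shannon's switching game now applies. Breaker maintains two
forests that both contain all of Maker's edges and together cover all edges he has not claimed. If
Maker claims an edge of one forest that closes a cycle with the other, then some edge of this cycle
lies outside the first forest; Breaker claims it, which breaks the cycle. So Maker's edges always
form a forest. Forests are expressed through linear independence of the boundary vectors of their
edges, where vertices on the sides count as zero. -/

section MakerBreaker

variable {board : Set Edge} {win : Set Edge → Prop} {p q : ℕ} {h : List (Finset Edge)}

theorem altUnion_append (b : Bool) (l : List (Finset Edge)) :
    ∀ {h : List (Finset Edge)}, Even h.length → altUnion b (h ++ l) = altUnion b h ∪ altUnion b l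
  | [], _ => by cases b <;> simp [altUnion]
  | [_], hh => by simp at hh
  | _ :: _ :: h, hh => by
    have hh' : Even h.length := by simpa [Nat.even_add_one] using hh
    cases b <;> simp [altUnion, altUnion_append _ l hh', Finset.union_assoc]

theorem firstClaimed_append_round (hh : Even h.length) (A D : Finset Edge) :
    firstClaimed (h ++ [A, D]) = firstClaimed h ∪ A := by
  simp [firstClaimed, altUnion_append _ _ hh, altUnion]

theorem secondClaimed_append_round (hh : Even h.length) (A D : Finset Edge) :
    secondClaimed (h ++ [A, D]) = secondClaimed h ∪ D := by
  simp [secondClaimed, altUnion_append _ _ hh, altUnion]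

theorem allClaimed_eq_union (h : List (Finset Edge)) :
    allClaimed h = firstClaimed h ∪ secondClaimed h := by
  simp only [allClaimed, firstClaimed, secondClaimed]
  induction h with
  | nil => rfl
  | cons A h ih => simp [altUnion, ih, Finset.union_assoc, Finset.union_comm (altUnion true h)]

theorem allClaimed_concat (h : List (Finset Edge)) (A : Finset Edge) :
    allClaimed (h ++ [A]) = allClaimed h ∪ A := by
  simp only [allClaimed]
  induction h with
  | nil => simp
  | cons D h ih => simp [ih]

theorem LegalMove.card_le {A : Finset Edge} (hA : LegalMove board h p A) : A.card ≤ p :=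
  hA.2.elim Eq.le fun hA => hA.1.le

theorem exists_superset_legalMove {D : Finset Edge} (hD : ↑D ⊆ board \ ↑(allClaimed h))
    (hcard : D.card ≤ q) : ∃ A, D ⊆ A ∧ LegalMove board h q A := by
  induction q, hcard using Nat.le_induction with
  | base => exact ⟨D, subset_rfl, hD, .inl rfl⟩
  | succ q _ ih =>
    obtain ⟨A, hDA, hA, hAcard⟩ := ih
    by_cases hfull : board \ ↑(allClaimed h) ⊆ (↑A : Set Edge)
    · exact ⟨A, hDA, hA, .inr ⟨by omega, hfull⟩⟩
    · obtain ⟨e, he, heA⟩ := Set.not_subset.mp hfull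
      have hq : A.card = q := hAcard.resolve_right fun hlt => hfull hlt.2
      refine ⟨insert e A, hDA.trans (A.subset_insert e), ?_, .inl ?_⟩
      · simpa [Set.insert_subset_iff] using And.intro he hA
      · rw [Finset.card_insert_of_notMem heA, hq]

open Classical in
theorem breakerWins_of_history_invariant (Inv : List (Finset Edge) → Prop) (nil : Inv [])
    (reply : ∀ h A, Inv h → LegalMove board h p A →
      ∃ D, LegalMove board (h ++ [A]) q D ∧ Inv (h ++ [A, D]))
    (not_win : ∀ h, Inv h → ¬ win ↑(firstClaimed h)) : BreakerWins board win p q := by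
  let IsReply (g : List (Finset Edge)) (D : Finset Edge) : Prop :=
    LegalMove board g q D ∧ Inv (g ++ [D])
  let τ : Strategy := fun g => if hg : ∃ D, IsReply g D then hg.choose else ∅
  refine ⟨τ, fun σ hσ => ?_⟩
  have isReply_of_inv (t : ℕ) (ht : Inv (hist σ τ t)) :
      IsReply (hist σ τ t ++ [σ (hist σ τ t)]) (τ (hist σ τ t ++ [σ (hist σ τ t)])) := by
    have hex : ∃ D, IsReply (hist σ τ t ++ [σ (hist σ τ t)]) D := by
      simpa [IsReply] using reply _ _ ht (hσ t)
    simpa only [τ, dif_pos hex] using hex.choose_spec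
  have inv (t : ℕ) : Inv (hist σ τ t) := by
    induction t with
    | zero => exact nil
    | succ t ih => simpa [hist] using (isReply_of_inv t ih).2
  exact ⟨fun t => (isReply_of_inv t (inv t)).1, fun t => not_win _ (inv t)⟩

theorem breakerWins_of_position_invariant (Inv : Finset Edge → Finset Edge → Prop)
    (empty : Inv ∅ ∅) (mono : ∀ M B B', B ⊆ B' → Inv M B → Inv M B')
    (reply : ∀ M B A : Finset Edge, Inv M B → A.card ≤ p → ↑A ⊆ board \ ↑(M ∪ B) →
      ∃ D : Finset Edge, D.card ≤ q ∧ ↑D ⊆ board \ ↑(M ∪ A ∪ B) ∧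
        Inv (M ∪ A) (B ∪ D))
    (not_win : ∀ M B : Finset Edge, Inv M B → ¬ win ↑M) : BreakerWins board win p q := by
  refine breakerWins_of_history_invariant
    (fun h => Even h.length ∧ Inv (firstClaimed h) (secondClaimed h)) ⟨Even.zero, empty⟩ ?_
    fun h hh => not_win _ _ hh.2
  rintro h A ⟨heven, hinv⟩ hA
  obtain ⟨D, hDcard, hD, hinv'⟩ :=
    reply _ _ A hinv hA.card_le (by simpa [allClaimed_eq_union] using hA.1)
  obtain ⟨D', hDD', hD'⟩ := exists_superset_legalMove (board := board) (h := h ++ [A])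
    (by rwa [allClaimed_concat, allClaimed_eq_union, Finset.union_right_comm]) hDcard
  refine ⟨D', hD', by simpa [Nat.even_add_one] using heven, ?_⟩
  rw [firstClaimed_append_round heven, secondClaimed_append_round heven]
  exact mono _ _ _ (Finset.union_subset_union_right hDD') hinv'

theorem BreakerWins.mono {win' : Set Edge → Prop} (hwin : ∀ S, win' S → win S)
    (hB : BreakerWins board win p q) : BreakerWins board win' p q := by
  obtain ⟨τ, hτ⟩ := hB
  exact ⟨τ, fun σ hσ => ⟨(hτ σ hσ).1, fun t ht => (hτ σ hσ).2 t (hwin _ ht)⟩⟩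

end MakerBreaker

section LinearIndependence

variable {ι K V : Type*} [DivisionRing K] [AddCommGroup V] [Module K V] {v : ι → V}

theorem exists_linearIndepOn_insert_diff {s t : Set ι} {e : ι}
    (ht : LinearIndepOn K v t) (hs : LinearIndepOn K v s) (he : e ∈ s) :
    ∃ D : Finset ι, D.card ≤ 1 ∧ ↑D ⊆ t \ s ∧ LinearIndepOn K v (insert e (t \ ↑D)) := by
  by_cases het : e ∈ t
  · exact ⟨∅, by simp, by simp, by simpa [Set.insert_eq_of_mem het] using ht⟩
  by_cases hspan : v e ∈ Submodule.span K (v '' t)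
  swap
  · exact ⟨∅, by simp, by simp, by simpa using ht.insert hspan⟩
  obtain ⟨l, hlt, hl⟩ := (Finsupp.mem_span_image_iff_linearCombination K).mp hspan
  obtain ⟨f, hfl, hfs⟩ : ∃ f ∈ l.support, f ∉ s := by
    by_contra! hls
    have hlsub : ↑l.support ⊆ s \ {e} := fun i hi => ⟨hls i hi, fun hie => het (hie ▸ hlt hi)⟩
    exact hs.notMem_span he
      ((Finsupp.mem_span_image_iff_linearCombination K).mpr ⟨l, hlsub, hl⟩)
  have hef : v e ∉ Submodule.span K (v '' (t \ {f})) := by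
    intro hmem
    obtain ⟨l', hlt', hl'⟩ := (Finsupp.mem_span_image_iff_linearCombination K).mp hmem
    have heq : l = l' := linearIndepOn_iffₛ.mp ht l hlt l'
      (Finsupp.supported_mono Set.sdiff_subset hlt') (hl.trans hl'.symm)
    exact (hlt' (heq ▸ hfl)).2 rfl
  exact ⟨{f}, by simp, by simpa using ⟨hlt hfl, hfs⟩,
    by simpa using (ht.mono Set.sdiff_subset).insert hef⟩

theorem linearIndepOn_of_triangular {κ α : Type*} [LinearOrder α] {v : ι → κ →₀ K} {s : Set ι}
    (pivot : ι → κ) (rank : κ → α) (diag : ∀ i ∈ s, v i (pivot i) ≠ 0)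
    (off_diag : ∀ i ∈ s, ∀ j ∈ s, i ≠ j → rank (pivot j) ≤ rank (pivot i) → v j (pivot i) = 0) :
    LinearIndepOn K v s := by
  rw [linearIndepOn_iff]
  intro l hls hl
  by_contra hl0
  obtain ⟨i, hi, hmax⟩ := l.support.exists_max_image (fun i => rank (pivot i))
    (Finsupp.support_nonempty_iff.mpr hl0)
  have hsum : l i * v i (pivot i) = 0 := by
    rw [Finsupp.linearCombination_apply, Finsupp.sum] at hl
    have hpivot : ∑ j ∈ l.support, l j * v j (pivot i) = 0 := by
      simpa [Finsupp.finsetSum_apply] using DFunLike.congr_fun hl (pivot i)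
    rwa [Finset.sum_eq_single_of_mem i hi fun j hj hji => by
      rw [off_diag i (hls hi) j (hls hj) hji.symm (hmax j hj), mul_zero]] at hpivot
  exact mul_ne_zero (Finsupp.mem_support_iff.mp hi) (diag i (hls hi)) hsum

end LinearIndependence

section Lehman

variable {K V : Type*} [DivisionRing K] [AddCommGroup V] [Module K V]

/-- A position from which Breaker, moving second, can keep Maker's edges independent: two
independent sets both contain Maker's edges `M` and together cover the part of the board that
Breaker has not claimed. Independence is that of the vectors `v e`, so that `v` represents a matroid
on the edges. -/
def LehmanPosition (K : Type*) {V : Type*} [DivisionRing K] [AddCommGroup V] [Module K V]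
    (v : Edge → V) (board M B : Set Edge) : Prop :=
  ∃ J₁ J₂ : Set Edge, LinearIndepOn K v J₁ ∧ LinearIndepOn K v J₂ ∧
    M ⊆ J₁ ∩ J₂ ∧ board \ B ⊆ J₁ ∪ J₂

namespace LehmanPosition

variable {v : Edge → V} {board M B B' : Set Edge}

theorem linearIndepOn (h : LehmanPosition K v board M B) : LinearIndepOn K v M := by
  obtain ⟨J₁, J₂, h₁, -, hM, -⟩ := h
  exact h₁.mono (hM.trans Set.inter_subset_left)

theorem mono (hB : B ⊆ B') (h : LehmanPosition K v board M B) :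
    LehmanPosition K v board M B' := by
  obtain ⟨J₁, J₂, h₁, h₂, hM, hcover⟩ := h
  exact ⟨J₁, J₂, h₁, h₂, hM, (Set.sdiff_subset_sdiff_right hB).trans hcover⟩

open Classical in
theorem exists_reply (h : LehmanPosition K v board M B) {e : Edge} (he : e ∈ board \ B) :
    ∃ D : Finset Edge, D.card ≤ 1 ∧ ↑D ⊆ board \ (insert e M ∪ B) ∧
      LehmanPosition K v board (insert e M) (B ∪ ↑D) := by
  obtain ⟨J₁, J₂, h₁, h₂, hM, hcover⟩ := h
  wlog heJ : e ∈ J₁ generalizing J₁ J₂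
  · exact this J₂ J₁ h₂ h₁ (by rwa [Set.inter_comm]) (by rwa [Set.union_comm])
      ((hcover he).resolve_left heJ)
  obtain ⟨D, hDcard, hD, hindep⟩ := exists_linearIndepOn_insert_diff h₂ h₁ heJ
  refine ⟨D.filter (· ∈ board \ B), (D.card_filter_le _).trans hDcard, fun f hf => ?_,
    J₁, insert e (J₂ \ ↑D), h₁, hindep, ?_, fun f hf => ?_⟩
  · have := @hD f
    grind
  · intro f hf
    have := @hD f
    have := @hM f
    grind
  · have := @hcover f
    grind

end LehmanPosition

theorem breakerWins_of_linearIndepOn_cover {v : Edge → V} {board J₁ J₂ : Set Edge}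
    (h₁ : LinearIndepOn K v J₁) (h₂ : LinearIndepOn K v J₂) (hcover : board ⊆ J₁ ∪ J₂) :
    BreakerWins board (fun S => ¬ LinearIndepOn K v S) 1 1 := by
  refine breakerWins_of_position_invariant (fun M B => LehmanPosition K v board M B)
    ⟨J₁, J₂, h₁, h₂, by simp, by simpa⟩ (fun M B B' hB h => h.mono (mod_cast hB)) ?_
    fun M B h hM => hM h.linearIndepOn
  intro M B A h hAcard hA
  rcases Finset.card_le_one_iff_subset_singleton.mp hAcard with ⟨e, he⟩
  rcases Finset.subset_singleton_iff.mp he with rfl | rfl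
  · exact ⟨∅, by simp, by simp, by simpa using h⟩
  · have heB : e ∈ board \ (B : Set Edge) := by
      have := @hA e
      grind
    obtain ⟨D, hDcard, hD, hpos⟩ := h.exists_reply heB
    exact ⟨D, hDcard, by simpa [Set.insert_union] using hD, by simpa using hpos⟩

end Lehman

section Board

variable {m n : ℕ}

/-- The `0`-chain of the vertex `u`, modulo the left and right sides of a board with `m` columns. -/
noncomputable def relVertex (m : ℕ) (u : Vtx) : Vtx →₀ ℚ :=
  if u.1 = 1 ∨ u.1 = m then 0 else Finsupp.single u 1

/-- The boundary of the edge `e`, oriented right or up, as a `0`-chain modulo the left and right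
sides of a board with `m` columns. A set of edges is independent for this family iff it is a forest
in the graph in which all vertices on the two sides are identified. -/
noncomputable def relBoundary (m : ℕ) (e : Edge) : Vtx →₀ ℚ :=
  relVertex m (ends e).2 - relVertex m (ends e).1

theorem isChain_of_forall_mem_cp {α : Type*} {R : α → α → Prop} :
    ∀ {l : List α}, (∀ a ∈ cp l, R a.1 a.2) → l.IsChain R
  | [], _ => .nil
  | [_], _ => .singleton _
  | a :: b :: l, h => List.isChain_cons_cons.mpr
    ⟨h (a, b) (by simp [cp]), isChain_of_forall_mem_cp fun c hc => h c (List.mem_cons_of_mem _ hc)⟩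

theorem HasCrossing.not_linearIndepOn {S : Set Edge} (hS : HasCrossing m n S) (hm : n < m) :
    ¬ LinearIndepOn ℚ (relBoundary m) S := by
  obtain ⟨l, ⟨a, ha, ha1⟩, ⟨b, hb, hbm⟩, hl, hcp⟩ := hS
  intro hindep
  obtain ⟨φ, hφ⟩ := Module.exists_dual_forall_apply_eq_one hindep
  let height (u : Vtx) : ℚ := φ (relVertex m u) - (u.1 + u.2)
  have height_eq_of_joins (u w : Vtx) (huw : ∃ e ∈ S, joins e u w) : height w = height u := by
    obtain ⟨e, he, huw⟩ := huw
    have hcoord : (ends e).2.1 + (ends e).2.2 = (ends e).1.1 + (ends e).1.2 + 1 := by grind [ends]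
    have hcoord' : ((ends e).2.1 + (ends e).2.2 : ℚ) = (ends e).1.1 + (ends e).1.2 + 1 :=
      mod_cast hcoord
    have hboundary : φ (relVertex m (ends e).2) - φ (relVertex m (ends e).1) = 1 := by
      rw [← map_sub]
      exact hφ e he
    rcases huw with ⟨rfl, rfl⟩ | ⟨rfl, rfl⟩ <;> simp only [height] <;> linarith
  have height_eq : height b = height a := by
    refine (isChain_of_forall_mem_cp hcp).induction (height · = height a) l
      (fun u w huw hu => (height_eq_of_joins u w huw).trans hu) (fun hne => ?_) b
      (List.mem_of_getLast? hb)
    rw [(List.head_eq_iff_head?_eq_some hne).mpr ha]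
  have height_left : height a = -(a.1 + a.2) := by simp [height, relVertex, ha1]
  have height_right : height b = -(b.1 + b.2) := by simp [height, relVertex, hbm]
  have hab : b.1 + b.2 = a.1 + a.2 := by
    rw [height_left, height_right, neg_inj] at height_eq
    exact_mod_cast height_eq
  have hbn := hl b (List.mem_of_getLast? hb)
  have han := hl a (List.mem_of_head? ha)
  simp only [lamVtx, Set.mem_ofPred_eq] at hbn han
  omega

theorem relVertex_apply_of_ne {u w : Vtx} (huw : u ≠ w) : relVertex m u w = 0 := by
  unfold relVertex
  split_ifs <;> simp [huw]

theorem relBoundary_apply_of_joins_of_ne {e : Edge} {u w p : Vtx} (he : joins e u w) (hu : u ≠ p)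
    (hw : w ≠ p) : relBoundary m e p = 0 := by
  rcases he with ⟨rfl, rfl⟩ | ⟨rfl, rfl⟩ <;>
    simp [relBoundary, relVertex_apply_of_ne hu, relVertex_apply_of_ne hw]

theorem relBoundary_apply_ne_zero_of_joins {e : Edge} {u w : Vtx} (he : joins e u w) (huw : u ≠ w)
    (hu : u.1 ≠ 1 ∧ u.1 ≠ m) : relBoundary m e u ≠ 0 := by
  have hw := relVertex_apply_of_ne (m := m) huw.symm
  have hu1 : relVertex m u u = 1 := by simp [relVertex, hu]
  rcases he with ⟨rfl, rfl⟩ | ⟨rfl, rfl⟩ <;> simp [relBoundary, hw, hu1]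

theorem linearIndepOn_relBoundary_of_parent {α : Type*} [LinearOrder α] {S : Set Edge}
    (child parent : Edge → Vtx) (rank : Vtx → α)
    (joins_child_parent : ∀ e ∈ S, joins e (child e) (parent e))
    (child_injOn : S.InjOn child) (child_inner : ∀ e ∈ S, (child e).1 ≠ 1 ∧ (child e).1 ≠ m)
    (rank_lt : ∀ e ∈ S, rank (parent e) < rank (child e)) :
    LinearIndepOn ℚ (relBoundary m) S := by
  refine linearIndepOn_of_triangular child rank (fun e he => ?_) fun e he f hf hef hrank => ?_
  · exact relBoundary_apply_ne_zero_of_joins (joins_child_parent e he)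
      (ne_of_apply_ne rank (rank_lt e he).ne') (child_inner e he)
  · exact relBoundary_apply_of_joins_of_ne (joins_child_parent f hf)
      (child_injOn.ne hf he hef.symm) (ne_of_apply_ne rank ((rank_lt f hf).trans_le hrank).ne)

/-- One of the two forests covering the board, the other being its complement on the board. Of the
edges leading left or up from a vertex `(x, y)`, it contains the left one if `x ≤ y + 1` and the
upper one otherwise; of those leading right or down, its complement contains the right one if
`y < x` and the lower one otherwise. -/
def leftUpForest : Set Edge :=
  {e | if e.2 then e.1.1 ≤ e.1.2 else e.1.2 + 1 < e.1.1}

theorem linearIndepOn_inter_leftUpForest (hm : n + 1 < m) :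
    LinearIndepOn ℚ (relBoundary m) (sEdges m n ∩ leftUpForest) := by
  refine linearIndepOn_relBoundary_of_parent
    (fun e => if e.2 then (ends e).2 else (ends e).1)
    (fun e => if e.2 then (ends e).1 else (ends e).2) (fun u => u.1 - u.2)
    (fun e _ => ?_) ?_ ?_ (fun e _ => ?_)
  · grind [joins]
  · rintro ⟨u, _⟩ ⟨-, he⟩ ⟨u', _⟩ ⟨-, he'⟩ heq
    grind [ends, leftUpForest]
  · rintro e ⟨he, he'⟩
    grind [ends, sEdges, lamEdges, lamVtx, leftUpForest]
  · grind [ends]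

theorem linearIndepOn_diff_leftUpForest :
    LinearIndepOn ℚ (relBoundary m) (sEdges m n \ leftUpForest) := by
  refine linearIndepOn_relBoundary_of_parent
    (fun e => if e.2 then (ends e).1 else (ends e).2)
    (fun e => if e.2 then (ends e).2 else (ends e).1) (fun u => u.2 - u.1)
    (fun e _ => ?_) ?_ ?_ (fun e _ => ?_)
  · grind [joins]
  · rintro ⟨u, _⟩ ⟨-, he⟩ ⟨u', _⟩ ⟨-, he'⟩ heq
    grind [ends, leftUpForest]
  · rintro e ⟨he, he'⟩
    grind [ends, sEdges, lamEdges, lamVtx, leftUpForest]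
  · grind [ends]

end Board

/-- **Reflection strategy.** For all (positive) natural numbers `m, n` with `m > n + 1`,
Breaker (the second player) has a winning strategy for the `(1,1)`-crossing game
(Bridg-it) on `S_{m×n}`. -/
theorem breaker_wins_bridgit_on_long_board
    (m n : ℕ) (hn : 1 ≤ n) (hm : n + 1 < m) :
    BreakerWins (sEdges m n) (HasCrossing m n) 1 1 :=
  (breakerWins_of_linearIndepOn_cover (linearIndepOn_inter_leftUpForest hm)
    linearIndepOn_diff_leftUpForest (Set.inter_union_sdiff _ _).ge).mono
    fun _ hS => hS.not_linearIndepOn (by omega)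

end CrossingGames
end

section
/- For all natural numbers m ≥ 2 and n ≥ 1, the dual graph S*_{m×n} is isomorphic (as a graph) to S_{(n+1)×(m−1)}, via a rotation and translation of the plane. In particular, S_{(n+1)×n} is self-dual: it is isomorphic to its own dual graph. -/
namespace CrossingGames

/-- A dual vertex: `(a,b) : ℤ × ℤ` encodes the dual vertex `(a + 0.5, b + 0.5)` of the
dual lattice `ℤ² + (0.5, 0.5)`. Dual edges are encoded like lattice edges, in these
shifted coordinates. -/
abbrev DVtx : Type := Vtx

/-- The dual edge `e*` of a lattice edge `e`: the unique edge of the dual lattice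
crossing `e` (i.e. having the same midpoint). The horizontal edge `(x+0.5, y)` has the
vertical dual edge joining `(x+0.5, y−0.5)` to `(x+0.5, y+0.5)`, and the vertical edge
`(x, y+0.5)` has the horizontal dual edge joining `(x−0.5, y+0.5)` to `(x+0.5, y+0.5)`,
expressed here in the shifted integer coordinates. -/
def dualEdge (e : Edge) : Edge :=
  if e.2 then ((e.1.1, e.1.2 - 1), false) else ((e.1.1 - 1, e.1.2), true)

/-- `D` (a set of dual edges) contains all the dual edges of a top-bottom crossing dual
path of a board of width `n`: a dual path joining a dual vertex with second coordinate
`n + 0.5` (encoded `n`) to a dual vertex with second coordinate `0.5` (encoded `0`). -/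
def HasDualCrossing (n : ℕ) (D : Set Edge) : Prop :=
  ∃ l : List DVtx,
    (∃ v, l.head? = some v ∧ v.2 = (n : ℤ)) ∧
    (∃ v, l.getLast? = some v ∧ v.2 = 0) ∧
    ∀ p ∈ cp l, ∃ d ∈ D, joins d p.1 p.2

/-- The plane rotation-and-translation used to identify `S*_{m×n}` with
`S_{(n+1)×(m−1)}`: in shifted integer coordinates it sends the dual vertex `(a, b)`
(i.e. the point `(a + 0.5, b + 0.5)`) to the vertex `(n + 1 − b, a)`; as a map of the
plane it is the composition of the rotation `(u,w) ↦ (−w,u)` by 90° with the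
translation by `(n + 1.5, −0.5)`. -/
def rotVtx (n : ℕ) (v : DVtx) : Vtx := ((n : ℤ) + 1 - v.2, v.1)

/-- The induced map on (dual) edges of the rotation-and-translation `rotVtx`. -/
def rotEdge (n : ℕ) (d : Edge) : Edge :=
  if d.2 then (((n : ℤ) + 1 - d.1.2, d.1.1), false) else (((n : ℤ) - d.1.2, d.1.1), true)

/-!
The composite `rotEdge n ∘ dualEdge` turns each edge by 90° about its midpoint and then applies the
quarter turn of the plane, so it preserves the direction of edges and acts on base vertices, up to
an offset, by `(x, y) ↦ (-y, x)`. It thus interchanges the roles of columns and rows. In `S_{m×n}`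
the horizontal edges form an `(m - 1) × n` array and the remaining vertical edges an
`(m - 2) × (n - 1)` array, and interchanging rows and columns turns these into the corresponding
arrays of `S_{(n+1)×(m-1)}`.
-/

theorem horizontal_mem_sEdges_iff {m n : ℕ} {x y : ℤ} :
    ((x, y), true) ∈ sEdges m n ↔ x ∈ Set.Ico 1 (m : ℤ) ∧ y ∈ Set.Icc 1 (n : ℤ) := by
  simp only [sEdges, lamEdges, lamVtx, ends, Set.mem_ofPred_eq, Set.mem_Ico, Set.mem_Icc]
  grind

theorem vertical_mem_sEdges_iff {m n : ℕ} {x y : ℤ} :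
    ((x, y), false) ∈ sEdges m n ↔ x ∈ Set.Ioo 1 (m : ℤ) ∧ y ∈ Set.Ico 1 (n : ℤ) := by
  simp only [sEdges, lamEdges, lamVtx, ends, Set.mem_ofPred_eq, Set.mem_Ioo, Set.mem_Ico]
  grind

/-- Lattice duality `e ↦ e*` as a permutation of the edge encodings; lattice and dual edges share
the type `Edge`, the latter in shifted coordinates. -/
def dualEdgeEquiv : Edge ≃ Edge where
  toFun := dualEdge
  invFun d := if d.2 then ((d.1.1 + 1, d.1.2), false) else ((d.1.1, d.1.2 + 1), true)
  left_inv := by rintro ⟨⟨x, y⟩, _ | _⟩ <;> simp [dualEdge]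
  right_inv := by rintro ⟨⟨a, b⟩, _ | _⟩ <;> simp [dualEdge]

/-- The action of the rotation-and-translation `rotVtx n` on edges, as a permutation of the edge
encodings. -/
def rotEdgeEquiv (n : ℕ) : Edge ≃ Edge where
  toFun := rotEdge n
  invFun e := if e.2 then ((e.1.2, n - e.1.1), false) else ((e.1.2, n + 1 - e.1.1), true)
  left_inv := by rintro ⟨⟨a, b⟩, _ | _⟩ <;> simp [rotEdge]
  right_inv := by rintro ⟨⟨x, y⟩, _ | _⟩ <;> simp [rotEdge]

theorem ends_rotEdge_horizontal (n : ℕ) (v : DVtx) :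
    ends (rotEdge n (v, true)) = (ends (v, true)).map (rotVtx n) (rotVtx n) := by
  simp [ends, rotEdge, rotVtx]

theorem ends_rotEdge_vertical (n : ℕ) (v : DVtx) :
    ends (rotEdge n (v, false)) = ((ends (v, false)).map (rotVtx n) (rotVtx n)).swap := by
  simp only [ends, rotEdge, rotVtx, Prod.map_apply, Prod.swap_prod_mk]
  grind

theorem rotEdge_dualEdge_horizontal (n : ℕ) (x y : ℤ) :
    rotEdge n (dualEdge ((x, y), true)) = ((n + 1 - y, x), true) := by
  simp only [rotEdge, dualEdge]
  grind

theorem rotEdge_dualEdge_vertical (n : ℕ) (x y : ℤ) :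
    rotEdge n (dualEdge ((x, y), false)) = ((n + 1 - y, x - 1), false) := by
  simp [rotEdge, dualEdge]

theorem rotEdge_dualEdge_mem_sEdges_iff {m n : ℕ} {e : Edge} :
    rotEdge n (dualEdge e) ∈ sEdges (n + 1) m ↔ e ∈ sEdges (m + 1) n := by
  obtain ⟨⟨x, y⟩, _ | _⟩ := e
  · simp only [rotEdge_dualEdge_vertical, vertical_mem_sEdges_iff, Set.mem_Ioo, Set.mem_Ico]
    lia
  · simp only [rotEdge_dualEdge_horizontal, horizontal_mem_sEdges_iff, Set.mem_Ico, Set.mem_Icc]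
    lia

theorem bijOn_rotEdge_image_dualEdge (m n : ℕ) :
    Set.BijOn (rotEdge n) (dualEdge '' sEdges (m + 1) n) (sEdges (n + 1) m) := by
  have h : Set.BijOn (rotEdge n ∘ dualEdge) (sEdges (m + 1) n) (sEdges (n + 1) m) :=
    (dualEdgeEquiv.trans (rotEdgeEquiv n)).bijOn fun _ ↦ rotEdge_dualEdge_mem_sEdges_iff
  exact (Set.bijOn_comp_iff dualEdgeEquiv.injective.injOn).mp h

/-- **Duality of the boards.** For `m ≥ 2` and `n ≥ 1`, the dual graph `S*_{m×n}` is
isomorphic, via the rotation-and-translation `rotVtx`, to `S_{(n+1)×(m−1)}`: the induced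
edge map is a bijection from the dual edges of `S_{m×n}` onto the edges of
`S_{(n+1)×(m−1)}`, and it is compatible with `rotVtx` on endpoints (so it preserves
incidence). In particular (taking `m = n + 1`), the board `S_{(n+1)×n}` is self-dual:
it is isomorphic to its own dual graph. -/
theorem dual_board_iso (m n : ℕ) (hm : 2 ≤ m) (hn : 1 ≤ n) :
    Set.BijOn (rotEdge n) (dualEdge '' sEdges m n) (sEdges (n + 1) (m - 1)) ∧
    (∀ d : Edge,
      (rotVtx n (ends d).1 = (ends (rotEdge n d)).1 ∧
        rotVtx n (ends d).2 = (ends (rotEdge n d)).2) ∨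
      (rotVtx n (ends d).1 = (ends (rotEdge n d)).2 ∧
        rotVtx n (ends d).2 = (ends (rotEdge n d)).1)) ∧
    Set.BijOn (rotEdge n) (dualEdge '' sEdges (n + 1) n) (sEdges (n + 1) n) := by
  obtain ⟨k, rfl⟩ : ∃ k, m = k + 1 := Nat.exists_eq_add_of_le' (by lia)
  refine ⟨bijOn_rotEdge_image_dualEdge k n, ?_, bijOn_rotEdge_image_dualEdge n n⟩
  rintro ⟨v, _ | _⟩
  · right
    simp [ends_rotEdge_vertical]
  · left
    simp [ends_rotEdge_horizontal]

end CrossingGames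
end
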